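/- arXiv:2211.16682 — 3 statements merged into one kernel-verified Lean document; each statement's English description precedes it below -/
import Mathlib

section
/- Let 1 ≤ δ ≤ β ≤ m, let x ∈ range(Aᵀ), and for each subset τ ⊆ {1,…,m} of cardinality β let I(τ) be a greedy δ-subset of τ for x and let x_τ⁺ be the exact block Kaczmarz update of x with respect to I(τ). Set Λ = max over all τ of λ_max(A_{I(τ)}ᵀ A_{I(τ)}), assume D := Σ_τ min_{i∈I(τ)} (A^{(i)}x − b_i)² > 0, and set ξ = (Σ_τ ‖A_τ x − b_τ‖₂²) / D. Then (1/C(m,β)) Σ_τ ‖x_τ⁺ − x⋆‖₂² ≤ (1 − (δ/ξ)·(β/m)·λ_min⁺(AᵀA)/Λ) · ‖x − x⋆‖₂². -/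
open Matrix Finset

/-- The largest eigenvalue of a square real matrix (as the supremum of its
eigenvalue set). -/
noncomputable def maxEig {k : ℕ} (M : Matrix (Fin k) (Fin k) ℝ) : ℝ :=
  sSup {μ : ℝ | Module.End.HasEigenvalue (Matrix.mulVecLin M) μ}

/-- The smallest positive eigenvalue of a square real matrix. -/
noncomputable def minPosEig {k : ℕ} (M : Matrix (Fin k) (Fin k) ℝ) : ℝ :=
  sInf {μ : ℝ | Module.End.HasEigenvalue (Matrix.mulVecLin M) μ ∧ 0 < μ}

/-- The restriction of `A` to the rows indexed by `I`. -/
def rowSub {m n : ℕ} (A : Matrix (Fin m) (Fin n) ℝ) (I : Finset (Fin m)) :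
    Matrix {i : Fin m // i ∈ I} (Fin n) ℝ :=
  fun i j => A i.1 j

/-- Squared Euclidean norm. -/
noncomputable def sqNorm {k : ℕ} (v : Fin k → ℝ) : ℝ := ∑ j, (v j) ^ 2

/-- `xp` is the exact block Kaczmarz update of `x` with respect to the row
index set `I`: it satisfies the equations indexed by `I` and minimizes the
distance to `x` among all such points (hence is the orthogonal projection of
`x` onto the affine solution set, which is the unique such minimizer). -/
def IsKaczmarzUpdate {m n : ℕ} (A : Matrix (Fin m) (Fin n) ℝ)
    (b : Fin m → ℝ) (I : Finset (Fin m)) (x xp : Fin n → ℝ) : Prop :=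
  (∀ i ∈ I, A i ⬝ᵥ xp = b i) ∧
  ∀ y : Fin n → ℝ, (∀ i ∈ I, A i ⬝ᵥ y = b i) → sqNorm (xp - x) ≤ sqNorm (y - x)

/-- `I` is a greedy `δ`-subset of `τ` for `x`: `I ⊆ τ`, `|I| = δ`, and the
residual entries on `I` dominate (in absolute value) those on `τ \ I`. -/
def IsGreedySubset {m n : ℕ} (A : Matrix (Fin m) (Fin n) ℝ) (b : Fin m → ℝ)
    (x : Fin n → ℝ) (δ : ℕ) (τ I : Finset (Fin m)) : Prop :=
  I ⊆ τ ∧ I.card = δ ∧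
    ∀ i ∈ I, ∀ j ∈ τ \ I, |A j ⬝ᵥ x - b j| ≤ |A i ⬝ᵥ x - b i|

theorem Matrix.IsHermitian.exists_eigenvector_expansion {k : ℕ} {M : Matrix (Fin k) (Fin k) ℝ}
    (hM : M.IsHermitian) :
    ∃ (u : Fin k → Fin k → ℝ) (ev : Fin k → ℝ),
      (∀ j, Module.End.HasEigenvector (Matrix.mulVecLin M) (ev j) (u j)) ∧
      ∀ v w : Fin k → ℝ, v ⬝ᵥ w = ∑ j, (u j ⬝ᵥ v) * (u j ⬝ᵥ w) := by
  refine ⟨fun j => hM.eigenvectorBasis j, hM.eigenvalues, fun j => ⟨?_, ?_⟩, fun v w => ?_⟩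
  · rw [Module.End.mem_eigenspace_iff]
    exact hM.mulVec_eigenvectorBasis j
  · intro h
    apply hM.eigenvectorBasis.orthonormal.ne_zero j
    ext i
    exact congrFun h i
  · have h := hM.eigenvectorBasis.sum_inner_mul_inner (WithLp.toLp 2 v) (WithLp.toLp 2 w)
    simp only [EuclideanSpace.inner_eq_star_dotProduct, star_trivial] at h
    rw [dotProduct_comm v w, ← h]
    exact Finset.sum_congr rfl fun j _ => by rw [dotProduct_comm w]

theorem dotProduct_transpose_mul_self_mulVec {ι : Type*} [Fintype ι] {n : ℕ}
    (B : Matrix ι (Fin n) ℝ) (v w : Fin n → ℝ) :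
    v ⬝ᵥ ((Bᵀ * B) *ᵥ w) = (B *ᵥ v) ⬝ᵥ (B *ᵥ w) := by
  rw [← Matrix.mulVec_mulVec, Matrix.dotProduct_mulVec, Matrix.vecMul_transpose]

theorem sqNorm_eq_dotProduct {k : ℕ} (v : Fin k → ℝ) : sqNorm v = v ⬝ᵥ v := by
  simp only [sqNorm, dotProduct, sq]

theorem sqNorm_nonneg {k : ℕ} (v : Fin k → ℝ) : 0 ≤ sqNorm v :=
  Finset.sum_nonneg fun _ _ => sq_nonneg _

theorem isHermitian_gram {ι : Type*} [Fintype ι] {n : ℕ} (B : Matrix ι (Fin n) ℝ) :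
    (Bᵀ * B).IsHermitian := by
  simpa using Matrix.isHermitian_conjTranspose_mul_self B

/-- Diagonalization of the Gram matrix of `B`. -/
theorem exists_gram_expansion {ι : Type*} [Fintype ι] {n : ℕ} (B : Matrix ι (Fin n) ℝ) :
    ∃ (u : Fin n → Fin n → ℝ) (ev : Fin n → ℝ),
      (∀ j, Module.End.HasEigenvalue (Matrix.mulVecLin (Bᵀ * B)) (ev j)) ∧
      (∀ j, (B *ᵥ u j) ⬝ᵥ (B *ᵥ u j) = ev j * (u j ⬝ᵥ u j)) ∧
      (∀ j, 0 < u j ⬝ᵥ u j) ∧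
      (∀ v : Fin n → ℝ, sqNorm v = ∑ j, (u j ⬝ᵥ v) ^ 2) ∧
      ∀ v : Fin n → ℝ, (B *ᵥ v) ⬝ᵥ (B *ᵥ v) = ∑ j, ev j * (u j ⬝ᵥ v) ^ 2 := by
  obtain ⟨u, ev, hu, hexp⟩ := (isHermitian_gram B).exists_eigenvector_expansion
  have hmul : ∀ j, (Bᵀ * B) *ᵥ u j = ev j • u j := fun j => (hu j).apply_eq_smul
  refine ⟨u, ev, fun j => Module.End.hasEigenvalue_of_hasEigenvector (hu j), fun j => ?_,
    fun j => ?_, fun v => ?_, fun v => ?_⟩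
  · rw [← dotProduct_transpose_mul_self_mulVec, hmul, dotProduct_smul, smul_eq_mul]
  · exact lt_of_le_of_ne (by rw [← sqNorm_eq_dotProduct]; exact sqNorm_nonneg _)
      fun h => (hu j).2 (dotProduct_self_eq_zero.mp h.symm)
  · rw [sqNorm_eq_dotProduct, hexp]
    exact Finset.sum_congr rfl fun j _ => (sq _).symm
  · rw [← dotProduct_transpose_mul_self_mulVec, hexp]
    refine Finset.sum_congr rfl fun j _ => ?_
    rw [dotProduct_transpose_mul_self_mulVec, dotProduct_comm (B *ᵥ u j),
      ← dotProduct_transpose_mul_self_mulVec, hmul, dotProduct_smul, smul_eq_mul,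
      dotProduct_comm v]
    ring

theorem dotProduct_mulVec_self_le_maxEig {ι : Type*} [Fintype ι] {n : ℕ}
    (B : Matrix ι (Fin n) ℝ) (v : Fin n → ℝ) :
    (B *ᵥ v) ⬝ᵥ (B *ᵥ v) ≤ maxEig (Bᵀ * B) * sqNorm v := by
  obtain ⟨u, ev, hev, -, -, hnorm, hform⟩ := exists_gram_expansion B
  rw [hform, hnorm, Finset.mul_sum]
  gcongr with j
  exact le_csSup (Module.End.finite_hasEigenvalue _).bddAbove (hev j)

theorem minPosEig_mul_sqNorm_le {ι : Type*} [Fintype ι] {n : ℕ}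
    (B : Matrix ι (Fin n) ℝ) {v : Fin n → ℝ} (hv : v ∈ Set.range Bᵀ.mulVec) :
    minPosEig (Bᵀ * B) * sqNorm v ≤ (B *ᵥ v) ⬝ᵥ (B *ᵥ v) := by
  obtain ⟨u, ev, hev, hself, hpos, hnorm, hform⟩ := exists_gram_expansion B
  obtain ⟨w, rfl⟩ := hv
  rw [hform, hnorm, Finset.mul_sum]
  refine Finset.sum_le_sum fun j _ => ?_
  have hnonneg : 0 ≤ ev j := by
    refine nonneg_of_mul_nonneg_left ?_ (hpos j)
    rw [← hself]
    exact Finset.sum_nonneg fun _ _ => mul_self_nonneg _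
  rcases hnonneg.eq_or_lt with h0 | h0
  · have hBu : B *ᵥ u j = 0 := dotProduct_self_eq_zero.mp (by rw [hself, ← h0, zero_mul])
    have : u j ⬝ᵥ (Bᵀ *ᵥ w) = 0 := by
      rw [Matrix.dotProduct_mulVec, Matrix.vecMul_transpose, hBu, zero_dotProduct]
    simp [this]
  · gcongr
    exact csInf_le ⟨0, fun μ hμ => hμ.2.le⟩ ⟨hev j, h0⟩

/-- Pythagorean identity for the orthogonal projection of `x` onto the solution set of a
subsystem. -/
theorem IsKaczmarzUpdate.sqNorm_sub_add_sqNorm_sub {m n : ℕ} {A : Matrix (Fin m) (Fin n) ℝ}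
    {b : Fin m → ℝ} {I : Finset (Fin m)} {x xp y : Fin n → ℝ}
    (h : IsKaczmarzUpdate A b I x xp) (hy : ∀ i ∈ I, A i ⬝ᵥ y = b i) :
    sqNorm (xp - y) + sqNorm (x - xp) = sqNorm (x - y) := by
  have horth : (xp - x) ⬝ᵥ (y - xp) = 0 := by
    set d := xp - x
    set z := y - xp
    have hq : 0 ≤ z ⬝ᵥ z := by rw [← sqNorm_eq_dotProduct]; exact sqNorm_nonneg _
    have hmin : ∀ t : ℝ, 0 ≤ 2 * t * (d ⬝ᵥ z) + t ^ 2 * (z ⬝ᵥ z) := by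
      intro t
      have hle := h.2 (xp + t • z) fun i hi => by
        simp [z, dotProduct_add, dotProduct_sub, dotProduct_smul, h.1 i hi, hy i hi]
      have heq : xp + t • z - x = d + t • z := by simp only [d]; abel
      rw [heq, sqNorm_eq_dotProduct, sqNorm_eq_dotProduct] at hle
      simp only [dotProduct_add, add_dotProduct, dotProduct_smul, smul_dotProduct, smul_eq_mul,
        dotProduct_comm z d] at hle
      linarith
    by_contra hne
    have hq1 : 0 < z ⬝ᵥ z + 1 := by linarith
    have ht := hmin (-(d ⬝ᵥ z) / (z ⬝ᵥ z + 1))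
    have hval : 2 * (-(d ⬝ᵥ z) / (z ⬝ᵥ z + 1)) * (d ⬝ᵥ z)
        + (-(d ⬝ᵥ z) / (z ⬝ᵥ z + 1)) ^ 2 * (z ⬝ᵥ z)
        = -((d ⬝ᵥ z) ^ 2 * (z ⬝ᵥ z + 2) / (z ⬝ᵥ z + 1) ^ 2) := by
      field_simp
      ring
    have : 0 < (d ⬝ᵥ z) ^ 2 * (z ⬝ᵥ z + 2) / (z ⬝ᵥ z + 1) ^ 2 := by positivity
    linarith
  simp only [sqNorm_eq_dotProduct, dotProduct_sub, sub_dotProduct] at horth ⊢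
  rw [dotProduct_comm y x, dotProduct_comm y xp, dotProduct_comm xp x] at *
  linarith

theorem sum_powersetCard_sum {m β : ℕ} (hβ : 1 ≤ β) (hβm : β ≤ m) (f : Fin m → ℝ) :
    ∑ τ ∈ Finset.powersetCard β (Finset.univ : Finset (Fin m)), ∑ i ∈ τ, f i
      = (m.choose β : ℝ) * ((β : ℝ) / m) * ∑ i, f i := by
  have hcount : ∀ i : Fin m,
      (#{τ ∈ Finset.powersetCard β (Finset.univ : Finset (Fin m)) | i ∈ τ} : ℝ)
        = (m.choose β : ℝ) * ((β : ℝ) / m) := by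
    intro i
    have hcard := Finset.card_filter_powersetCard_subset {i} (Finset.univ : Finset (Fin m)) β
    simp only [Finset.singleton_subset_iff, Finset.mem_univ, Finset.card_singleton,
      Finset.card_univ, Fintype.card_fin, forall_const] at hcard
    rw [hcard (by simpa using hβ)]
    obtain ⟨k, rfl⟩ := Nat.exists_eq_add_of_le' hβ
    obtain ⟨l, rfl⟩ := Nat.exists_eq_add_of_le' (hβ.trans hβm)
    have := Nat.add_one_mul_choose_eq l k
    rw [← mul_div_assoc, eq_div_iff (by positivity)]
    simp only [Nat.add_sub_cancel]
    rw [mul_comm]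
    exact_mod_cast this
  calc _ = ∑ τ ∈ Finset.powersetCard β (Finset.univ : Finset (Fin m)),
        ∑ i, if i ∈ τ then f i else 0 :=
        Finset.sum_congr rfl fun τ _ => by simp
    _ = _ := by
      rw [Finset.sum_comm, Finset.mul_sum]
      refine Finset.sum_congr rfl fun i _ => ?_
      rw [← Finset.sum_filter, Finset.sum_const, nsmul_eq_mul, hcount]

theorem rowSub_mulVec_dotProduct_self {m n : ℕ} (A : Matrix (Fin m) (Fin n) ℝ) (I : Finset (Fin m))
    (v : Fin n → ℝ) :
    (rowSub A I *ᵥ v) ⬝ᵥ (rowSub A I *ᵥ v) = ∑ i ∈ I, (A i ⬝ᵥ v) ^ 2 := by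
  rw [← Finset.sum_coe_sort I]
  exact Finset.sum_congr rfl fun i _ => (sq _).symm

theorem card_mul_sInf_le_sum {ι : Type*} (I : Finset ι) (f : ι → ℝ) :
    (#I : ℝ) * sInf (f '' ↑I) ≤ ∑ i ∈ I, f i := by
  rw [← nsmul_eq_mul]
  exact Finset.card_nsmul_le_sum _ _ _ fun i hi =>
    csInf_le (I.finite_toSet.image f).bddBelow ⟨i, hi, rfl⟩

theorem rbskm_one_step {m n : ℕ} (β δ : ℕ)
    (hδ : 1 ≤ δ) (hδβ : δ ≤ β) (hβm : β ≤ m)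
    (A : Matrix (Fin m) (Fin n) ℝ) (hA : A ≠ 0) (b : Fin m → ℝ)
    (xstar : Fin n → ℝ) (hconsistent : A.mulVec xstar = b)
    (hxstar : xstar ∈ Set.range Aᵀ.mulVec)
    (x : Fin n → ℝ) (hx : x ∈ Set.range Aᵀ.mulVec)
    (I : Finset (Fin m) → Finset (Fin m))
    (hI : ∀ τ ∈ Finset.powersetCard β (Finset.univ : Finset (Fin m)),
      IsGreedySubset A b x δ τ (I τ))
    (xp : Finset (Fin m) → Fin n → ℝ)
    (hxp : ∀ τ ∈ Finset.powersetCard β (Finset.univ : Finset (Fin m)),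
      IsKaczmarzUpdate A b (I τ) x (xp τ))
    (Λ : ℝ)
    (hΛ : Λ = sSup {μ : ℝ |
      ∃ τ ∈ Finset.powersetCard β (Finset.univ : Finset (Fin m)),
        μ = maxEig ((rowSub A (I τ))ᵀ * rowSub A (I τ))})
    (D : ℝ)
    (hD : D = ∑ τ ∈ Finset.powersetCard β (Finset.univ : Finset (Fin m)),
      sInf ((fun i => (A i ⬝ᵥ x - b i) ^ 2) '' ↑(I τ)))
    (hDpos : 0 < D)
    (ξ : ℝ)
    (hξ : ξ = (∑ τ ∈ Finset.powersetCard β (Finset.univ : Finset (Fin m)),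
      ∑ i ∈ τ, (A i ⬝ᵥ x - b i) ^ 2) / D) :
    (1 / (m.choose β : ℝ)) *
        ∑ τ ∈ Finset.powersetCard β (Finset.univ : Finset (Fin m)),
          sqNorm (xp τ - xstar) ≤
      (1 - ((δ : ℝ) / ξ) * ((β : ℝ) / (m : ℝ)) * (minPosEig (Aᵀ * A) / Λ)) *
        sqNorm (x - xstar) := by
  set T := Finset.powersetCard β (Finset.univ : Finset (Fin m)) with hT
  have hb : ∀ i, A i ⬝ᵥ xstar = b i := fun i => congrFun hconsistent i
  -- The guaranteed decrease of the squared error for a single block.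
  have hstep : ∀ τ ∈ T, (δ : ℝ) * sInf ((fun i => (A i ⬝ᵥ x - b i) ^ 2) '' ↑(I τ))
      ≤ Λ * sqNorm (x - xp τ) := by
    intro τ hτ
    have hmax : maxEig ((rowSub A (I τ))ᵀ * rowSub A (I τ)) ≤ Λ := by
      rw [hΛ]
      refine le_csSup (Set.Finite.bddAbove ?_) ⟨τ, hτ, rfl⟩
      refine (T.finite_toSet.image
        fun τ => maxEig ((rowSub A (I τ))ᵀ * rowSub A (I τ))).subset ?_
      rintro _ ⟨σ, hσ, rfl⟩
      exact ⟨σ, hσ, rfl⟩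
    have hres : ∑ i ∈ I τ, (A i ⬝ᵥ x - b i) ^ 2
        = (rowSub A (I τ) *ᵥ (x - xp τ)) ⬝ᵥ (rowSub A (I τ) *ᵥ (x - xp τ)) := by
      rw [rowSub_mulVec_dotProduct_self]
      exact Finset.sum_congr rfl fun i hi => by rw [dotProduct_sub, (hxp τ hτ).1 i hi]
    calc _ ≤ ∑ i ∈ I τ, (A i ⬝ᵥ x - b i) ^ 2 := by
          rw [← (hI τ hτ).2.1]
          exact card_mul_sInf_le_sum _ _
      _ ≤ maxEig ((rowSub A (I τ))ᵀ * rowSub A (I τ)) * sqNorm (x - xp τ) := by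
          rw [hres]
          exact dotProduct_mulVec_self_le_maxEig _ _
      _ ≤ _ := mul_le_mul_of_nonneg_right hmax (sqNorm_nonneg _)
  have hsum : (δ : ℝ) * D ≤ Λ * ∑ τ ∈ T, sqNorm (x - xp τ) := by
    rw [hD, Finset.mul_sum, Finset.mul_sum]
    exact Finset.sum_le_sum hstep
  have hδpos : (0 : ℝ) < δ := by exact_mod_cast hδ
  have hdec : 0 ≤ ∑ τ ∈ T, sqNorm (x - xp τ) := Finset.sum_nonneg fun _ _ => sqNorm_nonneg _
  have hΛpos : 0 < Λ :=
    pos_of_mul_pos_left ((mul_pos hδpos hDpos).trans_le hsum) hdec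
  have hpyth : ∑ τ ∈ T, sqNorm (xp τ - xstar) + ∑ τ ∈ T, sqNorm (x - xp τ)
      = (m.choose β : ℝ) * sqNorm (x - xstar) := by
    rw [← Finset.sum_add_distrib, Finset.sum_congr rfl fun τ hτ =>
      (hxp τ hτ).sqNorm_sub_add_sqNorm_sub fun i _ => hb i]
    simp [hT]
  set R := ∑ i, (A i ⬝ᵥ x - b i) ^ 2 with hR
  have hmin : minPosEig (Aᵀ * A) * sqNorm (x - xstar) ≤ R := by
    have hv : x - xstar ∈ Set.range Aᵀ.mulVec := by
      obtain ⟨y, rfl⟩ := hx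
      obtain ⟨z, rfl⟩ := hxstar
      exact ⟨y - z, Matrix.mulVec_sub _ _ _⟩
    refine (minPosEig_mul_sqNorm_le A hv).trans_eq (Finset.sum_congr rfl fun i _ => ?_)
    rw [← sq, ← hb i, ← dotProduct_sub]
    rfl
  rw [sum_powersetCard_sum (hδ.trans hδβ) hβm, ← hR] at hξ
  have hCpos : (0 : ℝ) < m.choose β := by exact_mod_cast Nat.choose_pos hβm
  have hβpos : (0 : ℝ) < β := by exact_mod_cast hδ.trans hδβ
  have hmpos : (0 : ℝ) < m := by exact_mod_cast hδ.trans (hδβ.trans hβm)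
  have hRnonneg : 0 ≤ R := Finset.sum_nonneg fun _ _ => sq_nonneg _
  have hrate : ((δ : ℝ) / ξ) * ((β : ℝ) / m) * (minPosEig (Aᵀ * A) / Λ) * sqNorm (x - xstar)
      ≤ (1 / (m.choose β : ℝ)) * ∑ τ ∈ T, sqNorm (x - xp τ) := by
    rcases hRnonneg.eq_or_lt with h0 | hRpos
    · rw [hξ, ← h0]
      simp only [mul_zero, zero_div, div_zero, zero_mul]
      positivity
    calc _ = (δ * D) / (m.choose β * Λ * R) * (minPosEig (Aᵀ * A) * sqNorm (x - xstar)) := by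
          rw [hξ]
          field_simp
      _ ≤ (δ * D) / (m.choose β * Λ * R) * R := by gcongr
      _ = (δ * D) / (m.choose β * Λ) := by field_simp
      _ ≤ (Λ * ∑ τ ∈ T, sqNorm (x - xp τ)) / (m.choose β * Λ) := by gcongr
      _ = _ := by field_simp
  have havg : (1 / (m.choose β : ℝ)) * ∑ τ ∈ T, sqNorm (xp τ - xstar)
      = sqNorm (x - xstar) - (1 / (m.choose β : ℝ)) * ∑ τ ∈ T, sqNorm (x - xp τ) := by
    rw [eq_sub_of_add_eq hpyth]
    field_simp
  rw [havg, sub_mul, one_mul]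
  linarith
end

section
/- Let I ⊆ {1,…,m} be an index set with λ_max(A_IᵀA_I) > 0, let x ∈ ℝ^n, and let x⁺ be the exact block Kaczmarz update of x with respect to I. Then ‖x⁺ − x⋆‖₂² ≤ ‖x − x⋆‖₂² − ‖A_I x − b_I‖₂² / λ_max(A_IᵀA_I). -/
open Matrix Finset

theorem le_maxEig {k : ℕ} {M : Matrix (Fin k) (Fin k) ℝ} {μ : ℝ} {v : Fin k → ℝ}
    (hv : v ≠ 0) (h : M *ᵥ v = μ • v) : μ ≤ maxEig M := by
  refine le_csSup (Module.End.finite_hasEigenvalue (Matrix.mulVecLin M)).bddAbove ?_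
  exact Module.End.hasEigenvalue_of_hasEigenvector
    (Module.End.hasEigenvector_iff.mpr ⟨Module.End.mem_eigenspace_iff.mpr h, hv⟩)

/-- Rayleigh quotient bound for a real symmetric matrix. -/
theorem dotProduct_mulVec_le_maxEig {k : ℕ} {M : Matrix (Fin k) (Fin k) ℝ}
    (hM : M.IsHermitian) (v : Fin k → ℝ) : v ⬝ᵥ M *ᵥ v ≤ maxEig M * sqNorm v := by
  have hN : (maxEig M • (1 : Matrix (Fin k) (Fin k) ℝ) - M).IsHermitian := by
    refine Matrix.IsHermitian.sub ?_ hM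
    simp [Matrix.IsHermitian]
  have hpsd : (maxEig M • (1 : Matrix (Fin k) (Fin k) ℝ) - M).PosSemidef := by
    refine hN.posSemidef_iff_eigenvalues_nonneg.mpr fun i => ?_
    have hmul := hN.mulVec_eigenvectorBasis i
    have hne : (hN.eigenvectorBasis i).ofLp ≠ 0 := fun h =>
      hN.eigenvectorBasis.orthonormal.ne_zero i (by ext j; exact congrFun h j)
    have hle : maxEig M - hN.eigenvalues i ≤ maxEig M := by
      refine le_maxEig hne ?_
      rw [Matrix.sub_mulVec, Matrix.smul_mulVec, Matrix.one_mulVec] at hmul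
      rw [sub_smul, ← hmul, sub_sub_cancel]
    simpa using hle
  have h := hpsd.dotProduct_mulVec_nonneg v
  simp only [star_trivial, Matrix.sub_mulVec, Matrix.smul_mulVec, Matrix.one_mulVec,
    dotProduct_sub, dotProduct_smul, smul_eq_mul] at h
  rw [sqNorm_eq_dotProduct]
  linarith

theorem sum_sq_dotProduct_le {m n : ℕ} (A : Matrix (Fin m) (Fin n) ℝ) (I : Finset (Fin m))
    (v : Fin n → ℝ) :
    ∑ i ∈ I, (A i ⬝ᵥ v) ^ 2 ≤ maxEig ((rowSub A I)ᵀ * rowSub A I) * sqNorm v := by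
  have hM : ((rowSub A I)ᵀ * rowSub A I).IsHermitian := by
    simpa using Matrix.isHermitian_conjTranspose_mul_self (rowSub A I)
  refine le_trans (le_of_eq ?_) (dotProduct_mulVec_le_maxEig hM v)
  rw [← Matrix.mulVec_mulVec, Matrix.dotProduct_mulVec, Matrix.vecMul_transpose,
    ← Finset.sum_coe_sort]
  simp only [sq]
  rfl

/-- Minimality along a line forces orthogonality to its direction. -/
theorem dotProduct_eq_zero_of_forall_sqNorm_le {k : ℕ} {u w : Fin k → ℝ}
    (h : ∀ t : ℝ, sqNorm u ≤ sqNorm (u + t • w)) : u ⬝ᵥ w = 0 := by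
  have hd : discrim (w ⬝ᵥ w) (2 * (u ⬝ᵥ w)) 0 ≤ 0 := by
    refine discrim_le_zero fun t => ?_
    have ht := h t
    simp only [sqNorm_eq_dotProduct, dotProduct_add, add_dotProduct, dotProduct_smul,
      smul_dotProduct, smul_eq_mul, dotProduct_comm w u] at ht
    linarith
  simp only [discrim] at hd
  nlinarith [sq_nonneg (u ⬝ᵥ w)]

theorem block_kaczmarz_one_step {m n : ℕ}
    (A : Matrix (Fin m) (Fin n) ℝ) (hA : A ≠ 0) (b : Fin m → ℝ)
    (xstar : Fin n → ℝ) (hconsistent : A.mulVec xstar = b)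
    (hxstar : xstar ∈ Set.range Aᵀ.mulVec)
    (I : Finset (Fin m))
    (hpos : 0 < maxEig ((rowSub A I)ᵀ * rowSub A I))
    (x xp : Fin n → ℝ)
    (hxp : IsKaczmarzUpdate A b I x xp) :
    sqNorm (xp - xstar) ≤
      sqNorm (x - xstar) -
        (∑ i ∈ I, (A i ⬝ᵥ x - b i) ^ 2) / maxEig ((rowSub A I)ᵀ * rowSub A I) := by
  obtain ⟨hsol, hmin⟩ := hxp
  have hstar : ∀ i, A i ⬝ᵥ xstar = b i := fun i => congrFun hconsistent i
  have horth : (xp - x) ⬝ᵥ (xstar - xp) = 0 := by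
    refine dotProduct_eq_zero_of_forall_sqNorm_le fun t => ?_
    have h := hmin (xp + t • (xstar - xp)) fun i hi => by
      simp [dotProduct_add, dotProduct_smul, dotProduct_sub, hsol i hi, hstar i]
    rwa [add_sub_right_comm] at h
  have hpyth : sqNorm (x - xstar) = sqNorm (x - xp) + sqNorm (xp - xstar) := by
    simp only [sqNorm_eq_dotProduct, dotProduct_sub, sub_dotProduct, dotProduct_comm xstar,
      dotProduct_comm xp x] at horth ⊢
    linarith
  have hres : ∑ i ∈ I, (A i ⬝ᵥ x - b i) ^ 2 = ∑ i ∈ I, (A i ⬝ᵥ (x - xp)) ^ 2 :=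
    Finset.sum_congr rfl fun i hi => by rw [dotProduct_sub, hsol i hi]
  have hdiv : (∑ i ∈ I, (A i ⬝ᵥ x - b i) ^ 2) / maxEig ((rowSub A I)ᵀ * rowSub A I) ≤
      sqNorm (x - xp) := by
    rw [div_le_iff₀' hpos, hres]
    exact sum_sq_dotProduct_le A I (x - xp)
  linarith
end

section
/- Let 1 ≤ δ ≤ β ≤ m, let x ∈ ℝ^n, and for each subset τ ⊆ {1,…,m} of cardinality β let I(τ) be a greedy δ-subset of τ for x. Assume D := Σ_τ min_{i∈I(τ)} (A^{(i)}x − b_i)² > 0 and set ξ = (Σ_τ ‖A_τ x − b_τ‖₂²) / D. Then ξ ≥ δ, and consequently 0 ≤ 1 − (δ/ξ)·(β/m)·λ_min⁺(AᵀA)/λ_max(AᵀA) < 1. -/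
open Matrix Finset

/-- A nonzero matrix of the form `Aᵀ * A` has a positive eigenvalue. -/
theorem exists_pos_hasEigenvalue_transpose_mul_self {m n : ℕ}
    {A : Matrix (Fin m) (Fin n) ℝ} (hA : A ≠ 0) :
    ∃ μ : ℝ, Module.End.HasEigenvalue (Matrix.mulVecLin (Aᵀ * A)) μ ∧ 0 < μ := by
  have hps : (Aᵀ * A).PosSemidef := by
    simpa [Matrix.conjTranspose_eq_transpose_of_trivial] using
      Matrix.posSemidef_conjTranspose_mul_self A
  have hne : Aᵀ * A ≠ 0 := by
    intro h
    apply hA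
    rw [← Matrix.conjTranspose_eq_transpose_of_trivial] at h
    exact Matrix.conjTranspose_mul_self_eq_zero.mp h
  have hev : hps.isHermitian.eigenvalues ≠ 0 := fun h =>
    hne (hps.isHermitian.eigenvalues_eq_zero_iff.mp h)
  obtain ⟨i, hi⟩ := Function.ne_iff.mp hev
  refine ⟨hps.isHermitian.eigenvalues i, ?_,
    lt_of_le_of_ne (hps.eigenvalues_nonneg i) (Ne.symm hi)⟩
  apply Module.End.hasEigenvalue_of_hasEigenvector
    (x := (hps.isHermitian.eigenvectorBasis i).ofLp)
  refine ⟨Module.End.mem_eigenspace_iff.mpr ?_, ?_⟩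
  · exact hps.isHermitian.mulVec_eigenvectorBasis i
  · intro h
    apply hps.isHermitian.eigenvectorBasis.orthonormal.ne_zero i
    ext j
    exact congrFun h j

/-- A matrix with a positive eigenvalue has `0 < minPosEig ≤ maxEig`. -/
theorem minPosEig_pos_and_le_maxEig {k : ℕ} {M : Matrix (Fin k) (Fin k) ℝ}
    (h : ∃ μ : ℝ, Module.End.HasEigenvalue (Matrix.mulVecLin M) μ ∧ 0 < μ) :
    0 < minPosEig M ∧ minPosEig M ≤ maxEig M := by
  have hfin : {μ : ℝ | Module.End.HasEigenvalue (Matrix.mulVecLin M) μ}.Finite :=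
    Module.End.finite_hasEigenvalue _
  have hmem : minPosEig M ∈
      {μ : ℝ | Module.End.HasEigenvalue (Matrix.mulVecLin M) μ ∧ 0 < μ} :=
    Set.Nonempty.csInf_mem h (hfin.subset fun _ hμ => hμ.1)
  exact ⟨hmem.2, le_csSup hfin.bddAbove hmem.1⟩

/-- The minimum of a nonnegative function over `I ⊆ τ`, counted `|I|` times, is at most
its sum over `τ`. -/
theorem card_mul_sInf_image_le_sum {ι : Type*} {f : ι → ℝ} (hf : ∀ i, 0 ≤ f i)
    {I τ : Finset ι} (h : I ⊆ τ) :
    (I.card : ℝ) * sInf (f '' ↑I) ≤ ∑ i ∈ τ, f i := by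
  calc (I.card : ℝ) * sInf (f '' ↑I) ≤ ∑ i ∈ I, f i := by
        rw [← nsmul_eq_mul]
        exact Finset.card_nsmul_le_sum _ _ _ fun i hi =>
          csInf_le (I.finite_toSet.image f).bddBelow ⟨i, hi, rfl⟩
    _ ≤ ∑ i ∈ τ, f i := Finset.sum_le_sum_of_subset_of_nonneg h fun i _ _ => hf i

theorem xi_lower_bound_and_convergence_factor {m n : ℕ} (β δ : ℕ)
    (hδ : 1 ≤ δ) (hδβ : δ ≤ β) (hβm : β ≤ m)
    (A : Matrix (Fin m) (Fin n) ℝ) (hA : A ≠ 0) (b : Fin m → ℝ)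
    (hconsistent : ∃ z : Fin n → ℝ, A.mulVec z = b)
    (x : Fin n → ℝ)
    (I : Finset (Fin m) → Finset (Fin m))
    (hI : ∀ τ ∈ Finset.powersetCard β (Finset.univ : Finset (Fin m)),
      IsGreedySubset A b x δ τ (I τ))
    (D : ℝ)
    (hD : D = ∑ τ ∈ Finset.powersetCard β (Finset.univ : Finset (Fin m)),
      sInf ((fun i => (A i ⬝ᵥ x - b i) ^ 2) '' ↑(I τ)))
    (hDpos : 0 < D)
    (ξ : ℝ)
    (hξ : ξ = (∑ τ ∈ Finset.powersetCard β (Finset.univ : Finset (Fin m)),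
      ∑ i ∈ τ, (A i ⬝ᵥ x - b i) ^ 2) / D) :
    (δ : ℝ) ≤ ξ ∧
    0 ≤ 1 - ((δ : ℝ) / ξ) * ((β : ℝ) / (m : ℝ)) *
        (minPosEig (Aᵀ * A) / maxEig (Aᵀ * A)) ∧
    1 - ((δ : ℝ) / ξ) * ((β : ℝ) / (m : ℝ)) *
        (minPosEig (Aᵀ * A) / maxEig (Aᵀ * A)) < 1 := by
  have hδξ : (δ : ℝ) ≤ ξ := by
    rw [hξ, le_div_iff₀ hDpos, hD, Finset.mul_sum]
    refine Finset.sum_le_sum fun τ hτ => ?_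
    obtain ⟨hsub, hcard, -⟩ := hI τ hτ
    rw [← hcard]
    exact card_mul_sInf_image_le_sum (fun i => sq_nonneg _) hsub
  obtain ⟨hmin, hle⟩ :=
    minPosEig_pos_and_le_maxEig (exists_pos_hasEigenvalue_transpose_mul_self hA)
  have hδ0 : (0 : ℝ) < δ := by exact_mod_cast hδ
  have hβ0 : (0 : ℝ) < β := by exact_mod_cast hδ.trans hδβ
  have hβm' : (β : ℝ) ≤ m := by exact_mod_cast hβm
  have hm0 : (0 : ℝ) < m := hβ0.trans_le hβm'
  have hξ0 : 0 < ξ := hδ0.trans_le hδξ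
  have hmax : 0 < maxEig (Aᵀ * A) := hmin.trans_le hle
  refine ⟨hδξ, sub_nonneg.mpr ?_, sub_lt_self _ (by positivity)⟩
  exact mul_le_one₀ (mul_le_one₀ (div_le_one_of_le₀ hδξ hξ0.le) (by positivity)
    (div_le_one_of_le₀ hβm' hm0.le)) (by positivity) (div_le_one_of_le₀ hle hmax.le)
end
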